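/- arXiv:2201.01263 — 2 statements merged into one kernel-verified Lean document; each statement's English description precedes it below -/
import Mathlib

section
/- Let Λ → Γ be a morphism of groupoids inducing maps on classifying spaces and group C*-algebras, and consider the commutative ladder relating the long exact sequence in KO-homology of the pair (BΓ, BΛ) to the long exact KO-theory sequence of the mapping cone C*-algebra C*(Γ, Λ), via the assembly maps A_Λ, A_Γ and the relative assembly map A_{Γ,Λ}. If there exist splitting maps s_Λ: KO_*(C*(Λ)) → KO_*(BΛ) with s_Λ ∘ A_Λ = id and s_Γ: KO_*(C*(Γ)) → KO_*(BΓ) with s_Γ ∘ A_Γ = id which are compatible, i.e. the square formed by s_Λ, s_Γ and the maps induced by Λ → Γ commutes, then the relative assembly map A_{Γ,Λ}: KO_n(BΓ, BΛ) → KO_n(C*(Γ, Λ)) is injective. -/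
/-- **Injectivity of the relative assembly map from compatible splittings.**
Given a morphism of groupoids `Λ → Γ`, the long exact sequence in periodic
real K-homology of the pair `(BΓ, BΛ)` (groups `KOBL n = KO_n(BΛ)`,
`KOBG n = KO_n(BΓ)`, `KOBrel n = KO_n(BΓ, BΛ)`) maps, via the assembly maps
`AL`, `AG` and the relative assembly map `Arel`, to the long exact KO-theory
sequence of the mapping cone C*-algebra `C*(Γ, Λ)` of
`C*(Λ) → C*(Γ)` (groups `KOCL n = KO_n(C*(Λ))`, `KOCG n = KO_n(C*(Γ))`,
`KOCrel n = KO_n(C*(Γ, Λ))`), with all squares commuting.  If there are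
splittings `sL` of `AL` and `sG` of `AG` compatible with the maps induced
by `Λ → Γ`, then the relative assembly map
`Arel : KO_n(BΓ, BΛ) → KO_n(C*(Γ, Λ))` is injective. -/
theorem relative_assembly_injective_of_compatible_splittings
    (KOBL KOBG KOBrel KOCL KOCG KOCrel : ℤ → Type)
    [∀ n, AddCommGroup (KOBL n)] [∀ n, AddCommGroup (KOBG n)]
    [∀ n, AddCommGroup (KOBrel n)] [∀ n, AddCommGroup (KOCL n)]
    [∀ n, AddCommGroup (KOCG n)] [∀ n, AddCommGroup (KOCrel n)]
    -- the long exact KO-homology sequence of the pair (BΓ, BΛ)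
    (iB : ∀ n, KOBL n →+ KOBG n) (jB : ∀ n, KOBG n →+ KOBrel n)
    (dB : ∀ n, KOBrel n →+ KOBL (n - 1))
    (hBex₁ : ∀ n, Function.Exact (iB n) (jB n))
    (hBex₂ : ∀ n, Function.Exact (jB n) (dB n))
    (hBex₃ : ∀ n, Function.Exact (dB n) (iB (n - 1)))
    -- the long exact KO-theory sequence of the mapping cone C*(Γ, Λ)
    (iC : ∀ n, KOCL n →+ KOCG n) (jC : ∀ n, KOCG n →+ KOCrel n)
    (dC : ∀ n, KOCrel n →+ KOCL (n - 1))
    (hCex₁ : ∀ n, Function.Exact (iC n) (jC n))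
    (hCex₂ : ∀ n, Function.Exact (jC n) (dC n))
    (hCex₃ : ∀ n, Function.Exact (dC n) (iC (n - 1)))
    -- the assembly maps, forming a commutative ladder
    (AL : ∀ n, KOBL n →+ KOCL n) (AG : ∀ n, KOBG n →+ KOCG n)
    (Arel : ∀ n, KOBrel n →+ KOCrel n)
    (hsq₁ : ∀ n, (AG n).comp (iB n) = (iC n).comp (AL n))
    (hsq₂ : ∀ n, (Arel n).comp (jB n) = (jC n).comp (AG n))
    (hsq₃ : ∀ n, (AL (n - 1)).comp (dB n) = (dC n).comp (Arel n))
    -- compatible splittings of the assembly maps for Λ and Γ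
    (sL : ∀ n, KOCL n →+ KOBL n)
    (hsL : ∀ n, (sL n).comp (AL n) = AddMonoidHom.id (KOBL n))
    (sG : ∀ n, KOCG n →+ KOBG n)
    (hsG : ∀ n, (sG n).comp (AG n) = AddMonoidHom.id (KOBG n))
    (hcompat : ∀ n, (sG n).comp (iC n) = (iB n).comp (sL n))
    (n : ℤ) :
    Function.Injective (Arel n) := by
  rw [injective_iff_map_eq_zero]
  intro x hx
  have hd : dB n x = 0 := by
    have h1 : AL (n - 1) (dB n x) = dC n (Arel n x) := DFunLike.congr_fun (hsq₃ n) x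
    have h2 : sL (n - 1) (AL (n - 1) (dB n x)) = dB n x :=
      DFunLike.congr_fun (hsL (n - 1)) (dB n x)
    rw [← h2, h1, hx, map_zero, map_zero]
  obtain ⟨y, rfl⟩ := (hBex₂ n x).1 hd
  have h3 : Arel n (jB n y) = jC n (AG n y) := DFunLike.congr_fun (hsq₂ n) y
  obtain ⟨z, hz⟩ := (hCex₁ n (AG n y)).1 (h3.symm.trans hx)
  have h4 : sG n (AG n y) = y := DFunLike.congr_fun (hsG n) y
  have h5 : sG n (iC n z) = iB n (sL n z) := DFunLike.congr_fun (hcompat n) z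
  exact (hBex₁ n y).2 ⟨sL n z, by rw [← h5, hz, h4]⟩
end

section
/- Let Γ be a group and Λ a subgroup (more generally, a family of subgroups Λⱼ ≤ Γ), and let G = Γ *_Λ Γ be the amalgamated product of two copies of Γ along Λ (the pushout of two copies of the inclusion Λ ↪ Γ). Then the folding homomorphism f: G → Γ, which restricts to the identity on each of the two copies of Γ, is a split surjection, its kernel F is a free group, and consequently G is isomorphic to the semidirect product F ⋊ Γ. -/
open Monoid

namespace FoldAux

variable {Γ : Type} [Group Γ] (K : Subgroup Γ)

/-- The free group on the nontrivial cosets. -/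
abbrev N := FreeGroup {q : Γ ⧸ K // q ≠ ((1 : Γ) : Γ ⧸ K)}

open Classical in
/-- The generator attached to a coset, trivial on the base coset. -/
noncomputable def e (q : Γ ⧸ K) : N K :=
  if h : q = ((1 : Γ) : Γ ⧸ K) then 1 else FreeGroup.of ⟨q, h⟩

theorem e_one : e K ((1 : Γ) : Γ ⧸ K) = 1 := by simp [e]

theorem e_ne (q : {q : Γ ⧸ K // q ≠ ((1 : Γ) : Γ ⧸ K)}) : e K q.1 = FreeGroup.of q := by
  simp [e, q.2]

/-- The action of `g`. -/
noncomputable def A (g : Γ) : N K →* N K :=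
  FreeGroup.lift (fun q => (e K (g : Γ ⧸ K))⁻¹ * e K (g • q.1))

theorem A_e (g : Γ) (q : Γ ⧸ K) : A K g (e K q) = (e K (g : Γ ⧸ K))⁻¹ * e K (g • q) := by
  by_cases h : q = ((1 : Γ) : Γ ⧸ K)
  · subst h
    rw [e_one, map_one, MulAction.Quotient.smul_coe, smul_eq_mul, mul_one, inv_mul_cancel]
  · rw [e_ne K ⟨q, h⟩, A, FreeGroup.lift_apply_of]

theorem A_one : A K 1 = MonoidHom.id _ := by
  refine FreeGroup.ext_hom _ _ fun q => ?_
  rw [← e_ne, A_e, e_one]; simp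

theorem A_mul (g h : Γ) : A K (g * h) = (A K g).comp (A K h) := by
  refine FreeGroup.ext_hom _ _ fun q => ?_
  rw [← e_ne, MonoidHom.comp_apply, A_e, A_e, map_mul, map_inv, A_e, A_e]
  simp [mul_smul]

/-- The action as automorphisms. -/
noncomputable def act : Γ →* MulAut (N K) where
  toFun g := MonoidHom.toMulEquiv (A K g) (A K g⁻¹)
    (by rw [← A_mul, inv_mul_cancel, A_one]) (by rw [← A_mul, mul_inv_cancel, A_one])
  map_one' := by ext x; simp [A_one]
  map_mul' g h := by
    ext x
    simp [A_mul]

theorem act_apply (g : Γ) (x : N K) : act K g x = A K g x := rfl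

/-- The twisted copy of `Γ`. -/
noncomputable def tw : Γ →* N K ⋊[act K] Γ where
  toFun g := ⟨e K (g : Γ ⧸ K), g⟩
  map_one' := by ext <;> simp [e_one]
  map_mul' g h := by
    ext
    · simp [act_apply, A_e]
    · simp

variable {H : Type} [Group H] (k : H →* Γ)

/-- The forward map. -/
noncomputable def fwd : PushoutI (fun _ : Bool => k) →* N k.range ⋊[act k.range] Γ :=
  PushoutI.lift (fun b => if b then tw k.range else SemidirectProduct.inr)
    (SemidirectProduct.inr.comp k) (by
      intro b
      cases b
      · rfl
      · ext x : 1
        have : ((k x : Γ) : Γ ⧸ k.range) = ((1 : Γ) : Γ ⧸ k.range) := by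
          rw [QuotientGroup.eq]; simp
        ext
        · simp [tw, this, e_one]
        · simp [tw])

theorem fwd_true (g : Γ) : fwd k (PushoutI.of (φ := fun _ : Bool => k) true g) = tw k.range g := by
  simp [fwd]

theorem fwd_false (g : Γ) :
    fwd k (PushoutI.of (φ := fun _ : Bool => k) false g) = SemidirectProduct.inr g := by
  simp [fwd]

/-- The elements of the kernel attached to `g`. -/
def y (g : Γ) : PushoutI (fun _ : Bool => k) :=
  PushoutI.of (φ := fun _ : Bool => k) true g * (PushoutI.of (φ := fun _ : Bool => k) false g)⁻¹

theorem y_mul (g : Γ) (h : H) : y k (g * k h) = y k g := by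
  have := (PushoutI.of_apply_eq_base (fun _ : Bool => k) true h).trans
    (PushoutI.of_apply_eq_base (fun _ : Bool => k) false h).symm
  simp only [y, map_mul, this]
  group

/-- The elements of the kernel attached to cosets. -/
def yq (q : Γ ⧸ k.range) : PushoutI (fun _ : Bool => k) :=
  Quotient.liftOn' q (y k) (by
    intro a b hab
    rw [QuotientGroup.leftRel_apply] at hab
    obtain ⟨h, hh⟩ := hab
    have : b = a * k h := by rw [hh]; group
    rw [this, y_mul])

theorem yq_coe (g : Γ) : yq k (g : Γ ⧸ k.range) = y k g := rfl

/-- The map on the free group. -/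
def bN : N k.range →* PushoutI (fun _ : Bool => k) := FreeGroup.lift fun q => yq k q.1

theorem bN_e (q : Γ ⧸ k.range) : bN k (e _ q) = yq k q := by
  by_cases h : q = ((1 : Γ) : Γ ⧸ k.range)
  · subst h
    rw [e_one, yq_coe]; simp [y]
  · rw [e_ne _ ⟨q, h⟩, bN, FreeGroup.lift_apply_of]

/-- The backward map. -/
noncomputable def bwd : N k.range ⋊[act k.range] Γ →* PushoutI (fun _ : Bool => k) :=
  SemidirectProduct.lift (bN k) (PushoutI.of (φ := fun _ : Bool => k) false) (by
    intro g
    refine FreeGroup.ext_hom _ _ fun q => ?_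
    obtain ⟨q, hq⟩ := q
    rw [← e_ne]
    induction q using QuotientGroup.induction_on with
    | H z =>
      simp only [MonoidHom.comp_apply, MulEquiv.coe_toMonoidHom, act_apply, A_e, map_mul, map_inv,
        bN_e, MulAut.conj_apply, MulAction.Quotient.smul_coe, yq_coe, smul_eq_mul, y]
      group)

/-- The isomorphism. -/
noncomputable def iso : PushoutI (fun _ : Bool => k) ≃* N k.range ⋊[act k.range] Γ :=
  MonoidHom.toMulEquiv (fwd k) (bwd k)
    (by
      refine PushoutI.hom_ext_nonempty fun b => ?_
      ext g
      cases b
      · simp [fwd_false, bwd]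
      · simp only [MonoidHom.comp_apply, fwd_true, MonoidHom.id_apply]
        simp [bwd, tw, SemidirectProduct.lift, bN_e, yq_coe, y])
    (by
      refine SemidirectProduct.hom_ext ?_ ?_
      · refine FreeGroup.ext_hom _ _ fun q => ?_
        obtain ⟨q, hq⟩ := q
        rw [← e_ne]
        induction q using QuotientGroup.induction_on with
        | H z =>
          simp only [MonoidHom.comp_apply, bwd, SemidirectProduct.lift_inl, bN_e, yq_coe, y,
            map_mul, map_inv, fwd_true, fwd_false, MonoidHom.id_apply]
          ext <;> simp [tw]
      · ext g : 1
        simp [bwd, fwd_false])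

theorem right_iso (f : PushoutI (fun _ : Bool => k) →* Γ)
    (hf : ∀ i : Bool, f.comp (PushoutI.of (φ := fun _ : Bool => k) i) = MonoidHom.id Γ) :
    SemidirectProduct.rightHom.comp (fwd k) = f := by
  refine PushoutI.hom_ext_nonempty fun b => ?_
  rw [hf]
  ext g
  cases b
  · simp [fwd_false]
  · simp [fwd_true, tw]

end FoldAux

/-- **The folding map of an amalgamated double of groups.**  Let `Γ` be a
group and `Λⱼ` (for `j : ι`) a family of subgroups, and let
`G = Γ *_Λ Γ` be the amalgamated product of two copies of `Γ` along the
family `Λ`, i.e. the pushout of two copies of the canonical map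
`k : *ⱼ Λⱼ → Γ` from the free product of the family (this is the colimit
of the diagram `Γ ← ⊔ⱼ Λⱼ → Γ` of groupoids).  Then the folding
homomorphism `f : G → Γ`, characterized by restricting to the identity on
each of the two copies of `Γ`, is a split surjection, its kernel is a free
group, and `G` is isomorphic to the semidirect product `ker f ⋊ Γ`. -/
theorem folding_map_split_free_kernel_semidirect
    {ι : Type} {Γ : Type} [Group Γ] (Λ : ι → Subgroup Γ)
    (k : Monoid.CoprodI (fun j : ι => (Λ j : Type)) →* Γ)
    (hk : ∀ (j : ι) (x : Λ j), k (Monoid.CoprodI.of x) = (x : Γ))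
    (f : Monoid.PushoutI (fun _ : Bool => k) →* Γ)
    (hf : ∀ i : Bool,
      f.comp (Monoid.PushoutI.of (φ := fun _ : Bool => k) i) =
        MonoidHom.id Γ) :
    (∃ s : Γ →* Monoid.PushoutI (fun _ : Bool => k),
        f.comp s = MonoidHom.id Γ) ∧
    Function.Surjective f ∧
    IsFreeGroup f.ker ∧
    ∃ φ : Γ →* MulAut f.ker,
      Nonempty (Monoid.PushoutI (fun _ : Bool => k) ≃* f.ker ⋊[φ] Γ) := by
  classical
  have hr := FoldAux.right_iso k f hf
  have hfi : ∀ x, (FoldAux.iso k x).right = f x := fun x => DFunLike.congr_fun hr x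
  have hs : ∃ s : Γ →* Monoid.PushoutI (fun _ : Bool => k), f.comp s = MonoidHom.id Γ :=
    ⟨_, hf false⟩
  let E : FoldAux.N k.range ≃* f.ker :=
    MulEquiv.ofBijective
      (((FoldAux.iso k).symm.toMonoidHom.comp SemidirectProduct.inl).codRestrict f.ker (by
        intro x
        rw [MonoidHom.mem_ker, ← hfi]
        simp))
      ⟨by
        intro a b hab
        have h := congrArg Subtype.val hab
        exact SemidirectProduct.inl_injective ((FoldAux.iso k).symm.injective h),
      by
        rintro ⟨x, hx⟩
        refine ⟨(FoldAux.iso k x).left, Subtype.ext ?_⟩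
        change (FoldAux.iso k).symm (SemidirectProduct.inl _) = x
        rw [MulEquiv.symm_apply_eq]
        ext
        · simp
        · rw [hfi, MonoidHom.mem_ker.1 hx]; simp⟩
  refine ⟨hs, fun g => ⟨_, DFunLike.congr_fun (hf false) g⟩, IsFreeGroup.ofMulEquiv E, _,
    ⟨(FoldAux.iso k).trans (SemidirectProduct.congr' E (MulEquiv.refl Γ))⟩⟩
end
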